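/- arXiv:2203.02663 — 3 statements merged into one kernel-verified Lean document; each statement's English description precedes it below -/
import Mathlib

section
/- (Theorem 2.1(b), transformation part.) Let q, r : ℝ → ℂ with r continuous, q continuously differentiable, and q·r Lebesgue integrable on every interval (−∞, x]. Define E(x) := exp((i/2)∫_{−∞}^x q(t)r(t) dt), p(x) := ((i/2)q'(x) + (1/4)q(x)²r(x))·E(x)^{−2}, and s(x) := r(x)·E(x)². Let ζ ∈ ℂ and λ := ζ². If (γ, ε) : ℝ → ℂ² is a differentiable pair satisfying the AKNS system γ'(x) = −iλ·γ(x) + p(x)·ε(x), ε'(x) = s(x)·γ(x) + iλ·ε(x) for all x, then the pair α(x) := E(x)·γ(x) − (i/2)·q(x)·E(x)^{−1}·ε(x), β(x) := ζ·E(x)^{−1}·ε(x) is a solution of system (1.1) with potentials q, r and spectral parameter ζ. -/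
open MeasureTheory

/-- The quantity E(x) = exp((i/2)∫_{-∞}^x q r) from (2.18). -/
noncomputable def Epot (q r : ℝ → ℂ) (x : ℝ) : ℂ :=
  Complex.exp ((Complex.I / 2) * ∫ t in Set.Iic x, q t * r t)

/-!
Both systems have trace-free coefficient matrices, a form preserved by three gauge moves:
conjugation by `diag(E, E⁻¹)`, a shear `u ↦ u - b v`, and a rescaling of the second component.
Since `E' = (i/2) q r E`, the first removes the powers of `E` from the AKNS potentials at the cost
of adding `±(i/2) q r` on the diagonal. The shear by `b = (i/2) q` cancels that diagonal term
together with `q'` and `q² r`, leaving the off-diagonal entries `ζ² q` and `r`, which the rescaling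
by `ζ` balances to `ζ q` and `ζ r`.
-/

/-- The pair `(u, v)` satisfies, at the point `x`, the linear system `u' = -a u + p v`,
`v' = s u + a v` with trace-free coefficient matrix. The entries `a`, `p`, `s` are the values of the
coefficients at `x`. The AKNS system (2.21) has `a = iλ`, and system (1.1) has `a = iζ²`, `p = ζ q`,
`s = ζ r`. -/
structure IsTraceFreeSolutionAt {𝕜 𝔸 : Type*} [NontriviallyNormedField 𝕜] [NormedCommRing 𝔸]
    [NormedAlgebra 𝕜 𝔸] (a p s : 𝔸) (u v : 𝕜 → 𝔸) (x : 𝕜) : Prop where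
  hasDerivAt_fst : HasDerivAt u (-a * u x + p * v x) x
  hasDerivAt_snd : HasDerivAt v (s * u x + a * v x) x

namespace IsTraceFreeSolutionAt

variable {𝕜 : Type*} [NontriviallyNormedField 𝕜] {x : 𝕜}

section CommRing

variable {𝔸 : Type*} [NormedCommRing 𝔸] [NormedAlgebra 𝕜 𝔸] {a p s : 𝔸} {u v : 𝕜 → 𝔸}

theorem shear {b : 𝕜 → 𝔸} {b' : 𝔸} (h : IsTraceFreeSolutionAt a p s u v x)
    (hb : HasDerivAt b b' x) :
    IsTraceFreeSolutionAt (a + b x * s) (p - b' - 2 * a * b x - b x ^ 2 * s) s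
      (fun y => u y - b y * v y) v x where
  hasDerivAt_fst :=
    (h.hasDerivAt_fst.fun_sub (hb.fun_mul h.hasDerivAt_snd)).congr_deriv (by ring)
  hasDerivAt_snd := h.hasDerivAt_snd.congr_deriv (by ring)

theorem const_mul_snd {c : 𝔸} (h : IsTraceFreeSolutionAt a (p * c) s u v x) :
    IsTraceFreeSolutionAt a p (c * s) u (fun y => c * v y) x where
  hasDerivAt_fst := h.hasDerivAt_fst.congr_deriv (by ring)
  hasDerivAt_snd := (h.hasDerivAt_snd.const_mul c).congr_deriv (by ring)

end CommRing

theorem diagonal_gauge {𝕜' : Type*} [NontriviallyNormedField 𝕜'] [NormedAlgebra 𝕜 𝕜']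
    {a p s k : 𝕜'} {u v E : 𝕜 → 𝕜'}
    (h : IsTraceFreeSolutionAt a (p / E x ^ 2) (s * E x ^ 2) u v x)
    (hE : HasDerivAt E (E x * k) x) (hEx : E x ≠ 0) :
    IsTraceFreeSolutionAt (a - k) p s (fun y => E y * u y) (fun y => (E y)⁻¹ * v y) x where
  hasDerivAt_fst := (hE.fun_mul h.hasDerivAt_fst).congr_deriv (by field_simp; ring)
  hasDerivAt_snd :=
    ((hE.fun_inv hEx).fun_mul h.hasDerivAt_snd).congr_deriv (by field_simp; ring)

end IsTraceFreeSolutionAt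

theorem hasDerivAt_integral_Iic {F : Type*} [NormedAddCommGroup F] [NormedSpace ℝ F]
    [CompleteSpace F] {f : ℝ → F} {x b : ℝ} (hxb : x < b) (hf : IntegrableOn f (Set.Iic b))
    (hfx : ContinuousAt f x) : HasDerivAt (fun y => ∫ t in Set.Iic y, f t) (f x) x := by
  have integrableOn_Iic {y : ℝ} (hy : y ≤ b) : IntegrableOn f (Set.Iic y) :=
    hf.mono_set (Set.Iic_subset_Iic.2 hy)
  have measurableAt : StronglyMeasurableAtFilter f (nhds x) :=
    ⟨Set.Iic b, Iic_mem_nhds hxb, hf.aestronglyMeasurable⟩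
  have split_at_x : (fun y => ∫ t in Set.Iic y, f t) =ᶠ[nhds x]
      fun y => (∫ t in Set.Iic x, f t) + ∫ t in x..y, f t := by
    filter_upwards [Iic_mem_nhds hxb] with y hy
    rw [← intervalIntegral.integral_Iic_sub_Iic (integrableOn_Iic hxb.le) (integrableOn_Iic hy),
      add_sub_cancel]
  exact ((intervalIntegral.integral_hasDerivAt_right IntervalIntegrable.refl measurableAt
    hfx).const_add _).congr_of_eventuallyEq split_at_x

theorem Epot_ne_zero (q r : ℝ → ℂ) (x : ℝ) : Epot q r x ≠ 0 :=
  Complex.exp_ne_zero _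

theorem hasDerivAt_Epot {q r : ℝ → ℂ} {x b : ℝ} (hxb : x < b)
    (hqr : IntegrableOn (fun t => q t * r t) (Set.Iic b))
    (hqrx : ContinuousAt (fun t => q t * r t) x) :
    HasDerivAt (Epot q r) (Epot q r x * ((Complex.I / 2) * (q x * r x))) x :=
  ((hasDerivAt_integral_Iic hxb hqr hqrx).const_mul (Complex.I / 2)).cexp

theorem akns_ps_to_system11_general {q r : ℝ → ℂ} {q' : ℂ} {x b : ℝ} (hxb : x < b)
    (hr : ContinuousAt r x) (hq : HasDerivAt q q' x)
    (hqr : IntegrableOn (fun t => q t * r t) (Set.Iic b)) {ζ : ℂ} {γ ε : ℝ → ℂ}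
    (h : IsTraceFreeSolutionAt (Complex.I * ζ ^ 2)
      (((Complex.I / 2) * q' + (1 / 4) * (q x) ^ 2 * r x) / (Epot q r x) ^ 2)
      (r x * (Epot q r x) ^ 2) γ ε x) :
    IsTraceFreeSolutionAt (Complex.I * ζ ^ 2) (ζ * q x) (ζ * r x)
      (fun y => Epot q r y * γ y - (Complex.I / 2) * q y * (Epot q r y)⁻¹ * ε y)
      (fun y => ζ * (Epot q r y)⁻¹ * ε y) x := by
  have hE := hasDerivAt_Epot hxb hqr (hq.continuousAt.mul hr)
  have gauged := h.diagonal_gauge hE (Epot_ne_zero q r x)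
  have sheared : IsTraceFreeSolutionAt (Complex.I * ζ ^ 2) (ζ * q x * ζ) (r x)
      (fun y => Epot q r y * γ y - (Complex.I / 2) * q y * ((Epot q r y)⁻¹ * ε y))
      (fun y => (Epot q r y)⁻¹ * ε y) x := by
    have diagonal_entry : Complex.I * ζ ^ 2 - Complex.I / 2 * (q x * r x)
        + Complex.I / 2 * q x * r x = Complex.I * ζ ^ 2 := by ring
    have upper_entry : Complex.I / 2 * q' + 1 / 4 * q x ^ 2 * r x - Complex.I / 2 * q'
        - 2 * (Complex.I * ζ ^ 2 - Complex.I / 2 * (q x * r x)) * (Complex.I / 2 * q x)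
        - (Complex.I / 2 * q x) ^ 2 * r x = ζ * q x * ζ := by
      linear_combination (q x ^ 2 * r x / 4 - ζ ^ 2 * q x) * Complex.I_sq
    simpa only [diagonal_entry, upper_entry] using gauged.shear (hq.const_mul (Complex.I / 2))
  simpa only [mul_assoc] using sheared.const_mul_snd

/-- Theorem 2.1(b), transformation part: a solution (γ,ε) of the AKNS system (2.21)
with potentials p = ((i/2)q' + (1/4)q² r) E⁻², s = r E² is transformed into a
solution of system (1.1) via α = E γ − (i/2) q E⁻¹ ε, β = ζ E⁻¹ ε. -/
theorem akns_ps_to_system11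
    (q r q' : ℝ → ℂ)
    (hr : Continuous r)
    (hq : ∀ x : ℝ, HasDerivAt q (q' x) x)
    (hq' : Continuous q')
    (hqr : ∀ x : ℝ, IntegrableOn (fun t => q t * r t) (Set.Iic x))
    (ζ : ℂ) (γ ε : ℝ → ℂ)
    (hγ : ∀ x : ℝ, HasDerivAt γ
      (-Complex.I * ζ ^ 2 * γ x
        + (((Complex.I / 2) * q' x + (1 / 4) * (q x) ^ 2 * r x) / (Epot q r x) ^ 2) * ε x) x)
    (hε : ∀ x : ℝ, HasDerivAt ε
      ((r x * (Epot q r x) ^ 2) * γ x + Complex.I * ζ ^ 2 * ε x) x) :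
    ∀ x : ℝ,
      HasDerivAt (fun x => Epot q r x * γ x - (Complex.I / 2) * q x * (Epot q r x)⁻¹ * ε x)
        (-Complex.I * ζ ^ 2
            * (Epot q r x * γ x - (Complex.I / 2) * q x * (Epot q r x)⁻¹ * ε x)
          + ζ * q x * (ζ * (Epot q r x)⁻¹ * ε x)) x ∧
      HasDerivAt (fun x => ζ * (Epot q r x)⁻¹ * ε x)
        (ζ * r x * (Epot q r x * γ x - (Complex.I / 2) * q x * (Epot q r x)⁻¹ * ε x)
          + Complex.I * ζ ^ 2 * (ζ * (Epot q r x)⁻¹ * ε x)) x := by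
  intro x
  obtain ⟨hα, hβ⟩ := akns_ps_to_system11_general (lt_add_one x) hr.continuousAt (hq x)
    (hqr (x + 1)) ⟨by simpa only [neg_mul] using hγ x, hε x⟩
  exact ⟨by simpa only [neg_mul] using hα, hβ⟩
end

section
/- (Theorem 5.1, second Marchenko equation.) With the matrix triplet data (A, B, C), (Ā, B̄, C̄) and M, M̄, Γ(x), Ω, Ω̄, Ω̄' as in the context, fix x ∈ ℝ and assume Γ(x) is invertible. Define K̄₂(x, y) := −C·e^{iAx}·Γ(x)^{−1}·e^{iAy}·B for y ≥ x. Then for every y > x the reflectionless Marchenko equation holds: K̄₂(x, y) + Ω(x + y) − i·∫_x^∞∫_x^∞ K̄₂(x, z)·Ω̄'(z + s)·Ω(s + y) ds dz = 0. -/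
open MeasureTheory Matrix

/-- e^{iAt} for a complex square matrix A and real t. -/
noncomputable def eiA {n : ℕ} (A : Matrix (Fin n) (Fin n) ℂ) (t : ℝ) :
    Matrix (Fin n) (Fin n) ℂ :=
  NormedSpace.exp ((Complex.I * t) • A)

/-!
The Marchenko integrand is `i` times
`C e^{iAx} Γ⁻¹ · (e^{iAz} B C̄ e^{-iĀz}) · Ā · (e^{-iĀs} B̄ C e^{iAs}) · e^{iAy} B`, so its integral
over `z, s > x` splits into two one-variable matrix integrals. Translating `z` and `s` by `x` turns
these into `e^{iAx} M e^{-iĀx}` and `e^{-iĀx} M̄ e^{iAx}`, and their product with `Ā` in the middle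
is `1 - Γ`. As `Γ⁻¹ (1 - Γ) = Γ⁻¹ - 1`, the double integral cancels the other two terms.

Convergence comes from exponential decay: the eigenvalues of `iA` lie in the open left half-plane,
so by the spectral mapping theorem `e^{iA}` has spectral radius less than one, and Gelfand's formula
bounds its powers.
-/

open Filter Asymptotics
open scoped NNReal ENNReal

section Centralizer

variable {R A : Type*} [CommRing R] [Ring A] [Algebra R A] {s : Set A}

lemma isUnit_of_isUnit_coe_centralizer {a : Subalgebra.centralizer R s}
    (ha : IsUnit (a : A)) : IsUnit a := by
  obtain ⟨u, hu⟩ := ha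
  have hu_inv : (↑u⁻¹ : A) ∈ Subalgebra.centralizer R s := fun b hb ↦
    Commute.units_inv_right (hu ▸ a.2 b hb)
  exact isUnit_iff_exists.mpr
    ⟨⟨_, hu_inv⟩, Subtype.ext (by simp [← hu]), Subtype.ext (by simp [← hu])⟩

lemma spectrum_coe_centralizer (a : Subalgebra.centralizer R s) :
    spectrum R (a : A) = spectrum R a :=
  (AlgHom.spectrum_apply_subset (Subalgebra.val _) a).antisymm fun _ hr hunit ↦
    hr (isUnit_of_isUnit_coe_centralizer hunit)

end Centralizer

section BanachAlgebra

open NormedSpace (exp)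

lemma spectrum_exp_subset_of_comm {A : Type*} [NormedCommRing A] [NormedAlgebra ℂ A]
    [CompleteSpace A] (a : A) : spectrum ℂ (exp a) ⊆ Complex.exp '' spectrum ℂ a := by
  intro μ hμ
  obtain ⟨φ, rfl⟩ := WeakDual.CharacterSpace.mem_spectrum_iff_exists.mp hμ
  refine ⟨φ a, AlgHom.apply_mem_spectrum φ a, ?_⟩
  let : NormedAlgebra ℚ A := .restrictScalars ℚ ℂ A
  rw [Complex.exp_eq_exp_ℂ]
  exact (NormedSpace.map_exp φ (map_continuous φ) a).symm

variable {A : Type*} [NormedRing A] [NormedAlgebra ℂ A] [CompleteSpace A] {a : A} {q : ℝ≥0}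

-- The bicommutant of `a` is a commutative Banach algebra containing `a` and `exp a`, and their
-- spectra do not change on passing to it.
theorem spectrum_exp (a : A) : spectrum ℂ (exp a) = Complex.exp '' spectrum ℂ a := by
  refine Set.Subset.antisymm ?_ ?_
  · let B : Subalgebra ℂ A := Subalgebra.centralizer ℂ ({a} : Set A).centralizer
    let : NormedCommRing B :=
      { (inferInstance : NormedRing B) with
        mul_comm := fun b c ↦ Subtype.ext <|
          Set.centralizer_centralizer_comm_of_comm (by simp) _ b.2 _ c.2 }
    have : CompleteSpace B := (Set.isClosed_centralizer _).completeSpace_coe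
    let a' : B := ⟨a, Set.subset_centralizer_centralizer rfl⟩
    have hexp : ((exp a' : B) : A) = exp a := by
      let : NormedAlgebra ℚ B := .restrictScalars ℚ ℂ B
      let : NormedAlgebra ℚ A := .restrictScalars ℚ ℂ A
      exact NormedSpace.map_exp B.val continuous_subtype_val a'
    calc spectrum ℂ (exp a) = spectrum ℂ (exp a') := by rw [← hexp, spectrum_coe_centralizer]
      _ ⊆ Complex.exp '' spectrum ℂ a' := spectrum_exp_subset_of_comm a'
      _ = Complex.exp '' spectrum ℂ a := by rw [← spectrum_coe_centralizer]
  · rintro _ ⟨μ, hμ, rfl⟩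
    simpa only [Complex.exp_eq_exp_ℂ] using spectrum.exp_mem_exp a hμ

lemma eventually_norm_pow_le_of_spectralRadius_lt (h : spectralRadius ℂ a < q) :
    ∀ᶠ n : ℕ in atTop, ‖a ^ n‖ ≤ q ^ n := by
  filter_upwards [(spectrum.gelfand_formula a).eventually_lt_const h, eventually_gt_atTop 0]
    with n hn hn_pos
  have hpow : (‖a ^ n‖₊ : ℝ≥0∞) ≤ q ^ n := by
    rw [one_div] at hn
    simpa using (ENNReal.rpow_inv_le_iff (by positivity)).mp hn.le
  exact_mod_cast hpow

lemma exp_ofReal_smul_eq_pow_mul (a : A) (t : ℝ) (n : ℕ) :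
    exp ((t : ℂ) • a) = exp a ^ n * exp (((t - n : ℝ) : ℂ) • a) := by
  let : NormedAlgebra ℚ A := .restrictScalars ℚ ℂ A
  rw [← NormedSpace.exp_nsmul,
    ← NormedSpace.exp_add_of_commute (((Commute.refl a).smul_left _).smul_right _),
    ← Nat.cast_smul_eq_nsmul ℂ, ← add_smul]
  simp

lemma isBigO_exp_ofReal_smul_of_spectralRadius_lt (h : spectralRadius ℂ (exp a) < q) :
    (fun t : ℝ ↦ exp ((t : ℂ) • a)) =O[atTop] fun t ↦ (q : ℝ) ^ t := by
  have hq : 0 < (q : ℝ) := by exact_mod_cast pos_of_gt h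
  have hcont : Continuous fun s : ℝ ↦ ‖exp ((s : ℂ) • a)‖ / (q : ℝ) ^ s := by
    let : NormedAlgebra ℚ A := .restrictScalars ℚ ℂ A
    exact (NormedSpace.exp_continuous.comp (by fun_prop)).norm.div
      (Real.continuous_const_rpow hq.ne') fun s ↦ (Real.rpow_pos_of_pos hq s).ne'
  obtain ⟨K, hK⟩ := (isCompact_Icc (a := (0 : ℝ)) (b := 1)).bddAbove_image hcont.continuousOn
  refine .of_bound K ?_
  filter_upwards [tendsto_nat_floor_atTop.eventually
    (eventually_norm_pow_le_of_spectralRadius_lt h), eventually_ge_atTop 0] with t hpow ht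
  set n := ⌊t⌋₊
  have hfract : t - n ∈ Set.Icc (0 : ℝ) 1 :=
    ⟨by linarith [Nat.floor_le ht], by linarith [Nat.lt_floor_add_one t]⟩
  have hbound : ‖exp (((t - n : ℝ) : ℂ) • a)‖ ≤ K * (q : ℝ) ^ (t - n) :=
    (div_le_iff₀ (Real.rpow_pos_of_pos hq _)).mp (hK (Set.mem_image_of_mem _ hfract))
  calc ‖exp ((t : ℂ) • a)‖
      ≤ ‖exp a ^ n‖ * ‖exp (((t - n : ℝ) : ℂ) • a)‖ := by
        rw [exp_ofReal_smul_eq_pow_mul a t n]; exact norm_mul_le _ _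
    _ ≤ (q : ℝ) ^ n * (K * (q : ℝ) ^ (t - n)) := by gcongr
    _ = K * (q : ℝ) ^ t := by
        rw [mul_left_comm, ← Real.rpow_natCast, ← Real.rpow_add hq, add_sub_cancel]
    _ = K * ‖(q : ℝ) ^ t‖ := by rw [Real.norm_of_nonneg (by positivity)]

theorem exists_isBigO_exp_ofReal_smul (ha : ∀ μ ∈ spectrum ℂ a, μ.re < 0) :
    ∃ c > 0, (fun t : ℝ ↦ exp ((t : ℂ) • a)) =O[atTop] fun t ↦ Real.exp (-c * t) := by
  rcases subsingleton_or_nontrivial A with _ | _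
  · exact ⟨1, one_pos, .of_bound 0 (.of_forall fun t ↦ by simp [Subsingleton.elim (exp _) (0 : A)])⟩
  have hradius : spectralRadius ℂ (exp a) < (1 : ℝ≥0) := by
    refine spectrum.spectralRadius_lt_of_forall_lt _ fun μ hμ ↦ ?_
    rw [spectrum_exp] at hμ
    obtain ⟨l, hl, rfl⟩ := hμ
    simpa [← NNReal.coe_lt_coe, Complex.norm_exp] using ha l hl
  obtain ⟨q, hradius_lt, hq_lt_one⟩ := ENNReal.lt_iff_exists_nnreal_btwn.mp hradius
  have hq : 0 < (q : ℝ) := by exact_mod_cast pos_of_gt hradius_lt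
  refine ⟨-Real.log q, by simpa using Real.log_neg hq (by exact_mod_cast hq_lt_one), ?_⟩
  simpa [Real.rpow_def_of_pos hq] using isBigO_exp_ofReal_smul_of_spectralRadius_lt hradius_lt

end BanachAlgebra

section Matrix

lemma mul_apply_fin_one {R m n : Type*} [NonUnitalNonAssocSemiring R] (X : Matrix m (Fin 1) R)
    (Y : Matrix (Fin 1) n R) (i : m) (j : n) : (X * Y) i j = X i 0 * Y 0 j := by
  simp [Matrix.mul_apply]

lemma mul_inv_mul_one_sub_mul {R k l n : Type*} [CommRing R] [Fintype n] [DecidableEq n]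
    {Γ : Matrix n n R} (hΓ : IsUnit Γ) (P : Matrix k n R) (Q : Matrix n l R) :
    P * Γ⁻¹ * (1 - Γ) * Q = P * Γ⁻¹ * Q - P * Q := by
  rw [Matrix.mul_sub, Matrix.mul_one, Matrix.sub_mul,
    Matrix.nonsing_inv_mul_cancel_right _ _ ((Matrix.isUnit_iff_isUnit_det Γ).mp hΓ)]

end Matrix

section MatrixIntegral

variable {𝕜 α β k l m n p q : Type*} [RCLike 𝕜] [Fintype l] [Fintype m]
  {_ : MeasurableSpace α} {_ : MeasurableSpace β} {μ : Measure α} {ν : Measure β}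
  {F : α → Matrix l m 𝕜}

lemma integrable_mul_mul_apply (hF : ∀ i j, Integrable (fun z ↦ F z i j) μ)
    (P : Matrix k l 𝕜) (Q : Matrix m q 𝕜) (i : k) (j : q) :
    Integrable (fun z ↦ (P * F z * Q) i j) μ := by
  simp only [Matrix.mul_apply]
  exact integrable_finsetSum _ fun b _ ↦
    (integrable_finsetSum _ fun a _ ↦ (hF a b).const_mul _).mul_const _

lemma integral_mul_mul_apply (hF : ∀ i j, Integrable (fun z ↦ F z i j) μ)
    (P : Matrix k l 𝕜) (Q : Matrix m q 𝕜) (i : k) (j : q) :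
    ∫ z, (P * F z * Q) i j ∂μ = (P * Matrix.of (fun a b ↦ ∫ z, F z a b ∂μ) * Q) i j := by
  simp only [Matrix.mul_apply, Matrix.of_apply]
  have hPF (b : m) : Integrable (fun z ↦ ∑ a, P i a * F z a b) μ :=
    integrable_finsetSum _ fun a _ ↦ (hF a b).const_mul _
  rw [integral_finsetSum _ fun b _ ↦ (hPF b).mul_const _]
  refine Finset.sum_congr rfl fun b _ ↦ ?_
  rw [integral_mul_const, integral_finsetSum _ fun a _ ↦ (hF a b).const_mul _]
  simp only [integral_const_mul]

lemma integral_integral_mul_apply [Fintype n] [Fintype p] {G : β → Matrix n p 𝕜}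
    (hF : ∀ i j, Integrable (fun z ↦ F z i j) μ) (hG : ∀ i j, Integrable (fun s ↦ G s i j) ν)
    (P : Matrix k l 𝕜) (Q : Matrix m n 𝕜) (R : Matrix p q 𝕜) (i : k) (j : q) :
    ∫ z, ∫ s, (P * F z * Q * G s * R) i j ∂ν ∂μ =
      (P * Matrix.of (fun a b ↦ ∫ z, F z a b ∂μ) * Q *
        Matrix.of (fun a b ↦ ∫ s, G s a b ∂ν) * R) i j := by
  simp only [integral_mul_mul_apply hG]
  simpa only [Matrix.mul_assoc] using integral_mul_mul_apply hF P
    (Q * Matrix.of (fun a b ↦ ∫ s, G s a b ∂ν) * R) i j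

end MatrixIntegral

section Translation

variable {E : Type*} [NormedAddCommGroup E]

lemma integrableOn_Ioi_iff_comp_add_right {f : ℝ → E} (x : ℝ) :
    IntegrableOn f (Set.Ioi x) ↔ IntegrableOn (fun z ↦ f (z + x)) (Set.Ioi 0) := by
  have hshift := (measurePreserving_add_right volume x).integrableOn_comp_preimage
    (measurableEmbedding_addRight x) (f := f) (s := Set.Ioi x)
  simpa [Function.comp_def] using hshift.symm

lemma integral_Ioi_eq_integral_comp_add_right [NormedSpace ℝ E] (f : ℝ → E) (x : ℝ) :
    ∫ z in Set.Ioi x, f z = ∫ z in Set.Ioi 0, f (z + x) := by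
  have hshift := (measurePreserving_add_right volume x).setIntegral_preimage_emb
    (measurableEmbedding_addRight x) f (Set.Ioi x)
  simpa using hshift.symm

end Translation

section MatrixExponential

variable {n : ℕ} (A : Matrix (Fin n) (Fin n) ℂ)

lemma eiA_add (s t : ℝ) : eiA A (s + t) = eiA A s * eiA A t := by
  simp only [eiA, Complex.ofReal_add, mul_add, add_smul]
  exact Matrix.exp_add_of_commute _ _ (((Commute.refl A).smul_left _).smul_right _)

lemma eiA_neg (t : ℝ) : eiA A (-t) = eiA (-A) t := by
  simp [eiA]

open scoped Matrix.Norms.Operator in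
lemma commute_eiA (t : ℝ) : Commute A (eiA A t) :=
  ((Commute.refl A).smul_right _).exp_right

lemma mul_eiA_neg_add (s t : ℝ) : A * eiA A (-(s + t)) = eiA (-A) s * A * eiA (-A) t := by
  rw [neg_add, eiA_add, ← Matrix.mul_assoc, (commute_eiA A (-s)).eq, eiA_neg, eiA_neg]

open scoped Matrix.Norms.Operator in
lemma continuous_eiA : Continuous (eiA A) :=
  NormedSpace.exp_continuous.comp (by fun_prop)

variable {A}

open scoped Matrix.Norms.Operator in
lemma exists_isBigO_eiA_apply (hA : ∀ μ ∈ spectrum ℂ A, 0 < μ.im) :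
    ∃ c > 0, ∀ i j, (fun t ↦ eiA A t i j) =O[atTop] fun t ↦ Real.exp (-c * t) := by
  have hIA : ∀ μ ∈ spectrum ℂ (Complex.I • A), μ.re < 0 := by
    rw [← Units.val_mk0 Complex.I_ne_zero, ← Units.smul_def, spectrum.unit_smul_eq_smul]
    rintro _ ⟨μ, hμ, rfl⟩
    simpa [Units.smul_def] using hA μ hμ
  obtain ⟨c, hc, hdecay⟩ := exists_isBigO_exp_ofReal_smul hIA
  refine ⟨c, hc, fun i j ↦ .trans ?_ hdecay⟩
  simp only [eiA, mul_comm Complex.I, ← smul_smul]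
  exact (Matrix.entryLinearMap ℂ ℂ i j).toContinuousLinearMap.isBigO_comp _ _

end MatrixExponential

/-- The matrix function `z ↦ e^{iAz} R e^{iDz}`. The matrices `M` and `M̄` are its integrals over
`(0, ∞)` for `(A, D, R) = (A, -Ā, B C̄)` and `(A, D, R) = (-Ā, A, B̄ C)`; the minus sign of
`e^{-iĀz}` is carried by the matrix so that both cases have the same shape. -/
noncomputable def expSandwich {n m : ℕ} (A : Matrix (Fin n) (Fin n) ℂ)
    (D : Matrix (Fin m) (Fin m) ℂ) (R : Matrix (Fin n) (Fin m) ℂ) (z : ℝ) :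
    Matrix (Fin n) (Fin m) ℂ :=
  eiA A z * R * eiA D z

section ExpSandwich

variable {n m : ℕ} {A : Matrix (Fin n) (Fin n) ℂ} {D : Matrix (Fin m) (Fin m) ℂ}
  {R : Matrix (Fin n) (Fin m) ℂ}

lemma expSandwich_add (z x : ℝ) :
    expSandwich A D R (z + x) = eiA A x * expSandwich A D R z * eiA D x := by
  rw [expSandwich, eiA_add D, add_comm z x, eiA_add A]
  simp only [expSandwich, Matrix.mul_assoc]

lemma expSandwich_neg_right {p : Type*} [Fintype p] (B : Matrix (Fin n) p ℂ)
    (C : Matrix p (Fin m) ℂ) (z : ℝ) :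
    expSandwich A (-D) (B * C) z = eiA A z * B * C * eiA D (-z) := by
  simp only [expSandwich, eiA_neg, Matrix.mul_assoc]

lemma expSandwich_neg_left {p : Type*} [Fintype p] (B : Matrix (Fin n) p ℂ)
    (C : Matrix p (Fin m) ℂ) (z : ℝ) :
    expSandwich (-A) D (B * C) z = eiA A (-z) * B * C * eiA D z := by
  simp only [expSandwich, eiA_neg, Matrix.mul_assoc]

lemma integrableOn_expSandwich_apply_of_spectrum_im_pos (hA : ∀ μ ∈ spectrum ℂ A, 0 < μ.im)
    (hD : ∀ μ ∈ spectrum ℂ D, 0 < μ.im) (x : ℝ) (i : Fin n) (j : Fin m) :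
    IntegrableOn (fun z ↦ expSandwich A D R z i j) (Set.Ioi x) := by
  obtain ⟨c, hc, hA_decay⟩ := exists_isBigO_eiA_apply hA
  obtain ⟨d, hd, hD_decay⟩ := exists_isBigO_eiA_apply hD
  have hdecay : (fun z ↦ expSandwich A D R z i j) =O[atTop] fun z ↦ Real.exp (-(c + d) * z) := by
    simp only [expSandwich, Matrix.mul_apply, neg_add, add_mul, Real.exp_add]
    refine .fun_sum fun b _ ↦ .mul (.fun_sum fun a _ ↦ ?_) (hD_decay b j)
    simpa only [mul_comm] using (hA_decay i a).const_mul_left (R a b)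
  have hcont : Continuous fun z ↦ expSandwich A D R z i j :=
    (((continuous_eiA A).matrix_mul continuous_const).matrix_mul (continuous_eiA D)).matrix_elem i j
  refine (integrable_norm_iff hcont.aestronglyMeasurable).mp ?_
  exact integrable_of_isBigO_exp_neg (add_pos hc hd) hcont.norm.continuousOn hdecay.norm_left

lemma spectrum_neg_im_pos (hA : ∀ μ ∈ spectrum ℂ A, μ.im < 0) :
    ∀ μ ∈ spectrum ℂ (-A), 0 < μ.im := fun μ hμ ↦ by
  simpa using hA (-μ) (by simpa [← spectrum.neg_eq] using hμ)

lemma integrableOn_eiA_mul_mul_eiA_neg_apply {p : Type*} [Fintype p] {B : Matrix (Fin n) p ℂ}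
    {C : Matrix p (Fin m) ℂ} (hA : ∀ μ ∈ spectrum ℂ A, 0 < μ.im)
    (hD : ∀ μ ∈ spectrum ℂ D, μ.im < 0) (x : ℝ) (i : Fin n) (j : Fin m) :
    IntegrableOn (fun z ↦ (eiA A z * B * C * eiA D (-z)) i j) (Set.Ioi x) := by
  simpa only [expSandwich_neg_right] using
    integrableOn_expSandwich_apply_of_spectrum_im_pos (R := B * C) hA (spectrum_neg_im_pos hD) x i j

lemma integrableOn_eiA_neg_mul_mul_eiA_apply {p : Type*} [Fintype p] {B : Matrix (Fin n) p ℂ}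
    {C : Matrix p (Fin m) ℂ} (hA : ∀ μ ∈ spectrum ℂ A, μ.im < 0)
    (hD : ∀ μ ∈ spectrum ℂ D, 0 < μ.im) (x : ℝ) (i : Fin n) (j : Fin m) :
    IntegrableOn (fun z ↦ (eiA A (-z) * B * C * eiA D z) i j) (Set.Ioi x) := by
  simpa only [expSandwich_neg_left] using
    integrableOn_expSandwich_apply_of_spectrum_im_pos (R := B * C) (spectrum_neg_im_pos hA) hD x i j

lemma integrableOn_Ioi_expSandwich_apply_of_Ioi_zero
    (hR : ∀ i j, IntegrableOn (fun z ↦ expSandwich A D R z i j) (Set.Ioi 0)) (x : ℝ)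
    (i : Fin n) (j : Fin m) :
    IntegrableOn (fun z ↦ expSandwich A D R z i j) (Set.Ioi x) := by
  rw [integrableOn_Ioi_iff_comp_add_right]
  simp only [expSandwich_add]
  exact integrable_mul_mul_apply hR (eiA A x) (eiA D x) i j

lemma integral_Ioi_expSandwich
    (hR : ∀ i j, IntegrableOn (fun z ↦ expSandwich A D R z i j) (Set.Ioi 0)) (x : ℝ) :
    Matrix.of (fun i j ↦ ∫ z in Set.Ioi x, expSandwich A D R z i j) =
      eiA A x * Matrix.of (fun i j ↦ ∫ z in Set.Ioi 0, expSandwich A D R z i j) * eiA D x := by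
  ext i j
  rw [Matrix.of_apply, integral_Ioi_eq_integral_comp_add_right, ← integral_mul_mul_apply hR]
  simp only [expSandwich_add]

lemma integral_integral_expSandwich_apply {k l : Type*} {S : Matrix (Fin m) (Fin n) ℂ}
    {M : Matrix (Fin n) (Fin m) ℂ} {Mb : Matrix (Fin m) (Fin n) ℂ}
    (hR : ∀ i j, IntegrableOn (fun z ↦ expSandwich A (-D) R z i j) (Set.Ioi 0))
    (hM : ∀ i j, M i j = ∫ z in Set.Ioi 0, expSandwich A (-D) R z i j)
    (hS : ∀ i j, IntegrableOn (fun s ↦ expSandwich (-D) A S s i j) (Set.Ioi 0))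
    (hMb : ∀ i j, Mb i j = ∫ s in Set.Ioi 0, expSandwich (-D) A S s i j)
    (P : Matrix k (Fin n) ℂ) (Q : Matrix (Fin n) l ℂ) (x : ℝ) (i : k) (j : l) :
    ∫ z in Set.Ioi x, ∫ s in Set.Ioi x,
        (P * expSandwich A (-D) R z * D * expSandwich (-D) A S s * Q) i j =
      (P * (eiA A x * M * D * eiA D (-(2 * x)) * Mb * eiA A x) * Q) i j := by
  have hM_eq : Matrix.of (fun a b ↦ ∫ z in Set.Ioi 0, expSandwich A (-D) R z a b) = M :=
    Matrix.ext fun a b ↦ (hM a b).symm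
  have hMb_eq : Matrix.of (fun a b ↦ ∫ s in Set.Ioi 0, expSandwich (-D) A S s a b) = Mb :=
    Matrix.ext fun a b ↦ (hMb a b).symm
  rw [integral_integral_mul_apply (integrableOn_Ioi_expSandwich_apply_of_Ioi_zero hR x)
      (integrableOn_Ioi_expSandwich_apply_of_Ioi_zero hS x),
    integral_Ioi_expSandwich hR, integral_Ioi_expSandwich hS, hM_eq, hMb_eq, two_mul,
    Matrix.mul_assoc (eiA A x * M) D, mul_eiA_neg_add]
  simp only [Matrix.mul_assoc]

end ExpSandwich

section Marchenko

variable {n m : ℕ} {p q : Type*} [Fintype p] [Fintype q]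
  {A : Matrix (Fin n) (Fin n) ℂ} {B : Matrix (Fin n) p ℂ} {C : Matrix q (Fin n) ℂ}
  {Ab : Matrix (Fin m) (Fin m) ℂ} {Bb : Matrix (Fin m) q ℂ} {Cb : Matrix p (Fin m) ℂ}

lemma marchenko_integrand_eq (P : Matrix q (Fin n) ℂ) (y z s : ℝ) :
    -(P * eiA A z * B) * (-Complex.I • (Cb * (Ab * eiA Ab (-(z + s))) * Bb)) *
        (C * eiA A (s + y) * B) =
      Complex.I • (P * expSandwich A (-Ab) (B * Cb) z * Ab *
        expSandwich (-Ab) A (Bb * C) s * (eiA A y * B)) := by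
  simp only [mul_eiA_neg_add, eiA_add A, expSandwich, Matrix.mul_assoc, Matrix.neg_mul,
    Matrix.mul_neg, Matrix.smul_mul, Matrix.mul_smul, smul_neg, neg_smul, neg_neg]

theorem marchenko_solution_Kb2_general
    {M : Matrix (Fin n) (Fin m) ℂ} {Mb : Matrix (Fin m) (Fin n) ℂ}
    (hM_int : ∀ i j, IntegrableOn (fun z ↦ (eiA A z * B * Cb * eiA Ab (-z)) i j) (Set.Ioi 0))
    (hM : ∀ i j, M i j = ∫ z in Set.Ioi (0 : ℝ), (eiA A z * B * Cb * eiA Ab (-z)) i j)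
    (hMb_int : ∀ i j, IntegrableOn (fun z ↦ (eiA Ab (-z) * Bb * C * eiA A z) i j) (Set.Ioi 0))
    (hMb : ∀ i j, Mb i j = ∫ z in Set.Ioi (0 : ℝ), (eiA Ab (-z) * Bb * C * eiA A z) i j)
    {x : ℝ} {Γ : Matrix (Fin n) (Fin n) ℂ}
    (hΓ : Γ = 1 - eiA A x * M * Ab * eiA Ab (-(2 * x)) * Mb * eiA A x) (hΓinv : IsUnit Γ)
    {K : ℝ → Matrix q p ℂ} (hK : ∀ y, x ≤ y → K y = -(C * eiA A x * Γ⁻¹ * eiA A y * B))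
    {y : ℝ} (hy : x ≤ y) (i : q) (j : p) :
    (K y + C * eiA A (x + y) * B) i j - Complex.I * ∫ z in Set.Ioi x, ∫ s in Set.Ioi x,
      (K z * (-Complex.I • (Cb * (Ab * eiA Ab (-(z + s))) * Bb)) *
        (C * eiA A (s + y) * B)) i j = 0 := by
  simp only [← expSandwich_neg_right, ← expSandwich_neg_left] at hM_int hM hMb_int hMb
  have hΓ_sub : eiA A x * M * Ab * eiA Ab (-(2 * x)) * Mb * eiA A x = 1 - Γ := by
    rw [hΓ, sub_sub_cancel]
  have hintegrand (z s : ℝ) (hz : x < z) :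
      (K z * (-Complex.I • (Cb * (Ab * eiA Ab (-(z + s))) * Bb)) * (C * eiA A (s + y) * B)) i j =
        Complex.I * (C * eiA A x * Γ⁻¹ * expSandwich A (-Ab) (B * Cb) z * Ab *
          expSandwich (-Ab) A (Bb * C) s * (eiA A y * B)) i j := by
    rw [hK z hz.le, marchenko_integrand_eq, Matrix.smul_apply, smul_eq_mul]
  have hintegral : ∫ z in Set.Ioi x, ∫ s in Set.Ioi x,
      (K z * (-Complex.I • (Cb * (Ab * eiA Ab (-(z + s))) * Bb)) * (C * eiA A (s + y) * B)) i j =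
        Complex.I *
          (C * eiA A x * Γ⁻¹ * (eiA A y * B) - C * eiA A x * (eiA A y * B)) i j := by
    rw [setIntegral_congr_fun measurableSet_Ioi fun z hz ↦
      integral_congr_ae (.of_forall fun s ↦ hintegrand z s hz)]
    simp only [integral_const_mul]
    rw [integral_integral_expSandwich_apply hM_int hM hMb_int hMb, hΓ_sub,
      mul_inv_mul_one_sub_mul hΓinv]
  rw [hintegral, hK y hy, eiA_add, ← mul_assoc, Complex.I_mul_I]
  simp only [Matrix.mul_assoc, Matrix.add_apply, Matrix.neg_apply, Matrix.sub_apply]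
  ring

end Marchenko

/-- Theorem 5.1, second Marchenko equation: the explicit kernel
K̄₂(x,y) = −C e^{iAx} Γ(x)⁻¹ e^{iAy} B solves the reflectionless Marchenko equation. -/
theorem marchenko_solution_Kb2
    (𝒩 𝒩b : ℕ)
    (A : Matrix (Fin 𝒩) (Fin 𝒩) ℂ) (hA : ∀ μ ∈ spectrum ℂ A, 0 < μ.im)
    (B : Matrix (Fin 𝒩) (Fin 1) ℂ) (C : Matrix (Fin 1) (Fin 𝒩) ℂ)
    (Ab : Matrix (Fin 𝒩b) (Fin 𝒩b) ℂ) (hAb : ∀ μ ∈ spectrum ℂ Ab, μ.im < 0)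
    (Bb : Matrix (Fin 𝒩b) (Fin 1) ℂ) (Cb : Matrix (Fin 1) (Fin 𝒩b) ℂ)
    (M : Matrix (Fin 𝒩) (Fin 𝒩b) ℂ)
    (hM : ∀ i j, M i j = ∫ z in Set.Ioi (0 : ℝ), (eiA A z * B * Cb * eiA Ab (-z)) i j)
    (Mb : Matrix (Fin 𝒩b) (Fin 𝒩) ℂ)
    (hMb : ∀ i j, Mb i j = ∫ z in Set.Ioi (0 : ℝ), (eiA Ab (-z) * Bb * C * eiA A z) i j)
    (x : ℝ)
    (Γ : Matrix (Fin 𝒩) (Fin 𝒩) ℂ)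
    (hΓ : Γ = 1 - eiA A x * M * Ab * eiA Ab (-(2 * x)) * Mb * eiA A x)
    (hΓinv : IsUnit Γ)
    (Kb₂ : ℝ → ℂ)
    (hKb₂ : ∀ y : ℝ, x ≤ y →
      Kb₂ y = -((C * eiA A x * Γ⁻¹ * eiA A y * B) 0 0)) :
    ∀ y : ℝ, x < y →
      Kb₂ y + (C * eiA A (x + y) * B) 0 0
        - Complex.I * ∫ z in Set.Ioi x, ∫ s in Set.Ioi x,
            Kb₂ z * (-Complex.I * ((Cb * (Ab * eiA Ab (-(z + s))) * Bb) 0 0))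
              * ((C * eiA A (s + y) * B) 0 0) = 0 := by
  intro y hy
  simpa only [Matrix.add_apply, mul_apply_fin_one, Matrix.smul_apply, smul_eq_mul, Matrix.of_apply]
    using marchenko_solution_Kb2_general (integrableOn_eiA_mul_mul_eiA_neg_apply hA hAb 0) hM
      (integrableOn_eiA_neg_mul_mul_eiA_apply hAb hA 0) hMb hΓ hΓinv
      (K := fun y ↦ Matrix.of fun _ _ ↦ Kb₂ y)
      (fun y hy ↦ by ext i j; simp [hKb₂ y hy, Fin.fin_one_eq_zero]) hy.le 0 0
end

section
/- (Example 6.3, verification that ψ̄ solves (1.1).) With q, r, art as in the context, let ζ ∈ ℂ with λ := ζ² ≠ i, and define ψ̄₁(ζ, x) := (−2(λ + 2i) − 3i·e^{6x}·(λ − i))·exp(−iλx − 2·art(1/3 − i·e^{6x})) / ((λ − i)·(2 + 3i·e^{6x})) and ψ̄₂(ζ, x) := 6ζ·exp(−iλx + 4x + 2·art(1/3 − i·e^{6x})) / ((λ − i)·(−4 + 3i·e^{6x})). Then for every x ∈ ℝ the pair (ψ̄₁(ζ,·), ψ̄₂(ζ,·)) is a solution of system (1.1) with potentials q, r and spectral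 parameter ζ: ∂ψ̄₁/∂x = −iζ²·ψ̄₁ + ζ·q(x)·ψ̄₂ and ∂ψ̄₂/∂x = ζ·r(x)·ψ̄₁ + iζ²·ψ̄₂. -/
/-- Principal inverse hyperbolic tangent. -/
noncomputable def art (w : ℂ) : ℂ :=
  (Complex.log (1 + w) - Complex.log (1 - w)) / 2

/-- The potential q of Example 6.3. -/
noncomputable def qEx (x : ℝ) : ℂ :=
  18 / (3 * Complex.exp (6 * x) - 2 * Complex.I)
    * Complex.exp (2 * x - 4 * art (1 / 3 - Complex.I * Complex.exp (6 * x)))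

/-- The potential r of Example 6.3. -/
noncomputable def rEx (x : ℝ) : ℂ :=
  12 / (3 * Complex.exp (6 * x) + 4 * Complex.I)
    * Complex.exp (4 * x + 4 * art (1 / 3 - Complex.I * Complex.exp (6 * x)))

/-- The first component of the Jost solution ψ̄ of Example 6.3. -/
noncomputable def ψb₁Ex (ζ : ℂ) (x : ℝ) : ℂ :=
  (-2 * (ζ ^ 2 + 2 * Complex.I) - 3 * Complex.I * Complex.exp (6 * x) * (ζ ^ 2 - Complex.I))
    * Complex.exp (-Complex.I * ζ ^ 2 * x
      - 2 * art (1 / 3 - Complex.I * Complex.exp (6 * x)))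
    / ((ζ ^ 2 - Complex.I) * (2 + 3 * Complex.I * Complex.exp (6 * x)))

/-- The second component of the Jost solution ψ̄ of Example 6.3. -/
noncomputable def ψb₂Ex (ζ : ℂ) (x : ℝ) : ℂ :=
  6 * ζ * Complex.exp (-Complex.I * ζ ^ 2 * x + 4 * x
      + 2 * art (1 / 3 - Complex.I * Complex.exp (6 * x)))
    / ((ζ ^ 2 - Complex.I) * (-4 + 3 * Complex.I * Complex.exp (6 * x)))

/-!
Since `e^{2 art w} = (1 + w)/(1 - w)`, everything is rational in `w = 1/3 - i e^{6x}`, `e^{2x}`,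
`e^{4x}` and `e^{-iζ²x}`. After removing the oscillation `e^{-iζ²x}` and the constant `(ζ² - i)⁻¹`,
the Jost solution becomes `u = ζ² - i - 2ζ²/(1 + w)`, `v = -2ζ e^{4x}/(1 - w)`, and the system turns
into an identity between rational functions by means of `w' = -6i e^{6x} = 6w - 2`.
-/

open Complex

theorem exp_two_mul_art {w : ℂ} (hadd : 1 + w ≠ 0) (hsub : 1 - w ≠ 0) :
    exp (2 * art w) = (1 + w) / (1 - w) := by
  rw [art, mul_div_cancel₀ _ two_ne_zero, exp_sub, exp_log hadd, exp_log hsub]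

theorem hasDerivAt_exp_mul_ofReal (c : ℂ) (x : ℝ) :
    HasDerivAt (fun x : ℝ ↦ exp (c * x)) (c * exp (c * x)) x := by
  simpa [mul_comm] using ((hasDerivAt_id (x : ℂ)).const_mul c).cexp.comp_ofReal

/-- The pair `(α, β)` solves system (1.1) (the Kaup–Newell scattering problem) on the whole line,
with potentials `q`, `r` and spectral parameter `ζ`. -/
def IsKaupNewellSolution (ζ : ℂ) (q r α β : ℝ → ℂ) : Prop :=
  ∀ x : ℝ,
    HasDerivAt α (-I * ζ ^ 2 * α x + ζ * q x * β x) x ∧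
    HasDerivAt β (ζ * r x * α x + I * ζ ^ 2 * β x) x

namespace IsKaupNewellSolution

variable {ζ : ℂ} {q r : ℝ → ℂ}

theorem const_mul {α β : ℝ → ℂ} (h : IsKaupNewellSolution ζ q r α β) (c : ℂ) :
    IsKaupNewellSolution ζ q r (fun x ↦ c * α x) (fun x ↦ c * β x) := fun x ↦
  ⟨((h x).1.const_mul c).congr_deriv (by ring), ((h x).2.const_mul c).congr_deriv (by ring)⟩

theorem exp_mul_of_hasDerivAt {u v : ℝ → ℂ} (hu : ∀ x, HasDerivAt u (ζ * q x * v x) x)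
    (hv : ∀ x, HasDerivAt v (ζ * r x * u x + 2 * I * ζ ^ 2 * v x) x) :
    IsKaupNewellSolution ζ q r (fun x ↦ exp (-I * ζ ^ 2 * x) * u x)
      (fun x ↦ exp (-I * ζ ^ 2 * x) * v x) := by
  intro x
  have hexp := hasDerivAt_exp_mul_ofReal (-I * ζ ^ 2) x
  exact ⟨(hexp.mul (hu x)).congr_deriv (by ring), (hexp.mul (hv x)).congr_deriv (by ring)⟩

end IsKaupNewellSolution

/-- The argument `w(x) = 1/3 - i e^{6x}` at which Example 6.3 evaluates `art`. Up to constant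
factors, `1 + w` and `1 - w` are also the denominators occurring in that example. -/
noncomputable def artArg (x : ℝ) : ℂ :=
  1 / 3 - I * exp (6 * x)

theorem re_artArg (x : ℝ) : (artArg x).re = 1 / 3 := by
  have hexp : exp (6 * x) = (Real.exp (6 * x) : ℂ) := by push_cast; rfl
  rw [artArg, hexp, sub_re, re_mul_ofReal, I_re]
  norm_num

theorem one_add_artArg_ne_zero (x : ℝ) : 1 + artArg x ≠ 0 := by
  intro h
  have hre := congrArg re h
  rw [add_re, one_re, re_artArg, zero_re] at hre
  norm_num at hre

theorem one_sub_artArg_ne_zero (x : ℝ) : 1 - artArg x ≠ 0 := by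
  intro h
  have hre := congrArg re h
  rw [sub_re, one_re, re_artArg, zero_re] at hre
  norm_num at hre

theorem exp_two_mul_art_artArg (x : ℝ) :
    exp (2 * art (artArg x)) = (1 + artArg x) / (1 - artArg x) :=
  exp_two_mul_art (one_add_artArg_ne_zero x) (one_sub_artArg_ne_zero x)

theorem exp_four_mul_art_artArg (x : ℝ) :
    exp (4 * art (artArg x)) = ((1 + artArg x) / (1 - artArg x)) ^ 2 := by
  rw [← exp_two_mul_art_artArg, ← exp_nat_mul]
  congr 1
  push_cast
  ring

theorem hasDerivAt_artArg (x : ℝ) : HasDerivAt artArg (-6 * I * exp (6 * x)) x :=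
  (((hasDerivAt_exp_mul_ofReal 6 x).const_mul I).const_sub (1 / 3)).congr_deriv (by ring)

theorem hasDerivAt_artArg_affine (x : ℝ) : HasDerivAt artArg (6 * artArg x - 2) x :=
  (hasDerivAt_artArg x).congr_deriv (by rw [artArg]; ring)

theorem qEx_eq (x : ℝ) :
    qEx x = 6 * I * exp (2 * x) * (1 - artArg x) / (1 + artArg x) ^ 2 := by
  have hadd := one_add_artArg_ne_zero x
  have hsub := one_sub_artArg_ne_zero x
  have hden : 3 * exp (6 * x) - 2 * I = -3 * I * (1 - artArg x) := by
    rw [artArg]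
    linear_combination 3 * exp (6 * x) * I_sq
  rw [qEx, ← artArg, hden, exp_sub, exp_four_mul_art_artArg]
  field_simp
  linear_combination -18 * I_sq

theorem rEx_eq (x : ℝ) :
    rEx x = -4 * I * exp (4 * x) * (1 + artArg x) / (1 - artArg x) ^ 2 := by
  have hadd := one_add_artArg_ne_zero x
  have hsub := one_sub_artArg_ne_zero x
  have hden : 3 * exp (6 * x) + 4 * I = 3 * I * (1 + artArg x) := by
    rw [artArg]
    linear_combination 3 * exp (6 * x) * I_sq
  rw [rEx, ← artArg, hden, exp_add, exp_four_mul_art_artArg]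
  field_simp
  linear_combination 12 * I_sq

/-- The first component of `ψ̄` with the factor `e^{-iζ²x} / (ζ² - i)` removed. -/
noncomputable def ψbAmplitude₁ (ζ : ℂ) (x : ℝ) : ℂ :=
  ζ ^ 2 - I - 2 * ζ ^ 2 / (1 + artArg x)

/-- The second component of `ψ̄` with the factor `e^{-iζ²x} / (ζ² - i)` removed. -/
noncomputable def ψbAmplitude₂ (ζ : ℂ) (x : ℝ) : ℂ :=
  -2 * ζ * exp (4 * x) / (1 - artArg x)

theorem ψb₁Ex_eq (ζ : ℂ) (x : ℝ) :
    ψb₁Ex ζ x = (ζ ^ 2 - I)⁻¹ * (exp (-I * ζ ^ 2 * x) * ψbAmplitude₁ ζ x) := by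
  have hadd := one_add_artArg_ne_zero x
  have hsub := one_sub_artArg_ne_zero x
  have hnum : -2 * (ζ ^ 2 + 2 * I) - 3 * I * exp (6 * x) * (ζ ^ 2 - I) =
      3 * ((ζ ^ 2 - I) * (1 + artArg x) - 2 * ζ ^ 2) := by
    rw [artArg]
    ring
  have hden : 2 + 3 * I * exp (6 * x) = 3 * (1 - artArg x) := by
    rw [artArg]
    ring
  rw [ψb₁Ex, ψbAmplitude₁, ← artArg, hnum, hden, exp_sub, exp_two_mul_art_artArg]
  field_simp

theorem ψb₂Ex_eq (ζ : ℂ) (x : ℝ) :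
    ψb₂Ex ζ x = (ζ ^ 2 - I)⁻¹ * (exp (-I * ζ ^ 2 * x) * ψbAmplitude₂ ζ x) := by
  have hadd := one_add_artArg_ne_zero x
  have hsub := one_sub_artArg_ne_zero x
  have hden : -4 + 3 * I * exp (6 * x) = -3 * (1 + artArg x) := by
    rw [artArg]
    ring
  rw [ψb₂Ex, ψbAmplitude₂, ← artArg, hden, exp_add, exp_add, exp_two_mul_art_artArg]
  field_simp
  ring

theorem hasDerivAt_ψbAmplitude₁ (ζ : ℂ) (x : ℝ) :
    HasDerivAt (ψbAmplitude₁ ζ) (ζ * qEx x * ψbAmplitude₂ ζ x) x := by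
  have hadd := one_add_artArg_ne_zero x
  have hsub := one_sub_artArg_ne_zero x
  have hexp : exp (6 * x) = exp (2 * x) * exp (4 * x) := by
    rw [← exp_add]
    ring_nf
  have hderiv := (((hasDerivAt_artArg x).const_add 1).fun_inv hadd).const_mul (2 * ζ ^ 2)
    |>.const_sub (ζ ^ 2 - I)
  refine hderiv.congr_deriv ?_
  rw [qEx_eq, ψbAmplitude₂, hexp]
  field_simp

theorem hasDerivAt_ψbAmplitude₂ (ζ : ℂ) (x : ℝ) :
    HasDerivAt (ψbAmplitude₂ ζ) (ζ * rEx x * ψbAmplitude₁ ζ x + 2 * I * ζ ^ 2 * ψbAmplitude₂ ζ x)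
      x := by
  have hadd := one_add_artArg_ne_zero x
  have hsub := one_sub_artArg_ne_zero x
  have hderiv := ((hasDerivAt_exp_mul_ofReal 4 x).const_mul (-2 * ζ)).fun_div
    ((hasDerivAt_artArg_affine x).const_sub 1) hsub
  refine hderiv.congr_deriv ?_
  rw [rEx_eq, ψbAmplitude₁, ψbAmplitude₂]
  field_simp
  linear_combination -4 * ζ * (1 + artArg x) * I_sq

/-- Example 6.3: the pair (ψ̄₁, ψ̄₂) solves system (1.1) with potentials qEx, rEx. -/
theorem example63_psibar_solves
    (ζ : ℂ) (hζ : ζ ^ 2 ≠ Complex.I) :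
    ∀ x : ℝ,
      HasDerivAt (fun x => ψb₁Ex ζ x)
        (-Complex.I * ζ ^ 2 * ψb₁Ex ζ x + ζ * qEx x * ψb₂Ex ζ x) x ∧
      HasDerivAt (fun x => ψb₂Ex ζ x)
        (ζ * rEx x * ψb₁Ex ζ x + Complex.I * ζ ^ 2 * ψb₂Ex ζ x) x := by
  have hamplitudes := IsKaupNewellSolution.exp_mul_of_hasDerivAt (hasDerivAt_ψbAmplitude₁ ζ)
    (hasDerivAt_ψbAmplitude₂ ζ)
  have hscaled := hamplitudes.const_mul (ζ ^ 2 - I)⁻¹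
  simpa only [IsKaupNewellSolution, ← ψb₁Ex_eq, ← ψb₂Ex_eq] using hscaled
end
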